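/- arXiv:math/9903192 — 2 statements merged into one kernel-verified Lean document; each statement's English description precedes it below -/
import Mathlib

section
/- Let D be a minimal Enriques diagram with exactly one root R. If m_R = 2, then D is isomorphic to the diagram A_k for some k ≥ 1. -/
open Classical Finset

/-- The raw data of a finite weighted forest equipped with a proximity relation.
The vertices are the elements of `Fin n`; `parent v` is the immediate predecessor of `v`
(`none` iff `v` is a root); `wt v` is the weight of `v`; and `prox a b` means
that `a` is proximate to `b`. -/
structure PreDiagram where
  n : ℕ
  parent : Fin n → Option (Fin n)
  wt : Fin n → ℕ
  prox : Fin n → Fin n → Prop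

namespace PreDiagram

variable (D : PreDiagram)

/-- `a` is the immediate predecessor of `b`. -/
def ImPred (a b : Fin D.n) : Prop := D.parent b = some a

/-- `a` is a predecessor of `b` (reflexive-transitive closure of `ImPred`). -/
def Pred (a b : Fin D.n) : Prop := Relation.ReflTransGen D.ImPred a b

/-- `a` is a proper predecessor of `b`. -/
def ProperPred (a b : Fin D.n) : Prop := Relation.TransGen D.ImPred a b

/-- `a` is a remote predecessor of `b`: a proper but not immediate predecessor. -/
def RemotePred (a b : Fin D.n) : Prop := D.ProperPred a b ∧ ¬ D.ImPred a b

def IsRoot (v : Fin D.n) : Prop := D.parent v = none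

/-- A leaf is a vertex with no proper successor. -/
def IsLeaf (v : Fin D.n) : Prop := ∀ w, ¬ D.ImPred v w

/-- `a` is remotely proximate to `b`: proximate to `b`, and `b` is a remote predecessor. -/
def RemoteProx (a b : Fin D.n) : Prop := D.prox a b ∧ D.RemotePred b a

/-- A satellite is a vertex proximate to a remote predecessor. -/
def IsSatellite (v : Fin D.n) : Prop := ∃ t, D.RemoteProx v t

/-- A free vertex is one that is not a satellite. -/
def IsFree (v : Fin D.n) : Prop := ¬ D.IsSatellite v

/-- The laws of a minimal Enriques diagram. -/
structure IsMED : Prop where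
  /-- The graph is a forest: no vertex is a proper predecessor of itself. -/
  forest : ∀ v, ¬ D.ProperPred v v
  /-- Every weight is at least `1`. -/
  wt_pos : ∀ v, 1 ≤ D.wt v
  /-- Law of Proximity: a root is proximate to no vertex. -/
  root_not_prox : ∀ v, D.IsRoot v → ∀ w, ¬ D.prox v w
  /-- Law of Proximity: a non-root is proximate to its immediate predecessor. -/
  prox_parent : ∀ v u, D.parent v = some u → D.prox v u
  /-- Law of Proximity: any other vertex a non-root is proximate to is a remote predecessor. -/
  prox_remote : ∀ v u w, D.parent v = some u → D.prox v w → w ≠ u → D.RemotePred w v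
  /-- Law of Proximity: a non-root is proximate to at most one vertex other than its
  immediate predecessor. -/
  prox_unique : ∀ v u w w', D.parent v = some u → D.prox v w → D.prox v w' →
      w ≠ u → w' ≠ u → w = w'
  /-- Law of Proximity: if `a` is proximate to `b` and `c` lies properly between them,
  then `c` is proximate to `b`. -/
  prox_between : ∀ a b c, D.prox a b → D.ProperPred b c → D.ProperPred c a → D.prox c b
  /-- Proximity Inequality. -/
  prox_ineq : ∀ v, ∑ w ∈ univ.filter (fun w => D.prox w v), D.wt w ≤ D.wt v
  /-- Law of Succession: a vertex `v` has at most `wt v` immediate successors. -/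
  succ_card : ∀ v, (univ.filter (fun w => D.ImPred v w)).card ≤ D.wt v
  /-- Law of Succession: at most two immediate successors are satellites. -/
  succ_sat : ∀ v w₁ w₂ w₃, D.ImPred v w₁ → D.ImPred v w₂ → D.ImPred v w₃ →
      D.IsSatellite w₁ → D.IsSatellite w₂ → D.IsSatellite w₃ →
      w₁ ≠ w₂ → w₁ ≠ w₃ → w₂ ≠ w₃ → False
  /-- Law of Succession: two distinct immediate successors of the same vertex cannot be
  satellites of the same vertex. -/
  succ_sat_diff : ∀ v w₁ w₂ t, D.ImPred v w₁ → D.ImPred v w₂ → w₁ ≠ w₂ →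
      D.RemoteProx w₁ t → D.RemoteProx w₂ t → False
  /-- Law of Minimality: every leaf of weight `1` is a satellite. -/
  minimal : ∀ v, D.IsLeaf v → D.wt v = 1 → D.IsSatellite v

/-- The number of roots. -/
noncomputable def rts : ℕ := (univ.filter (fun v => D.IsRoot v)).card

/-- The number of free vertices. -/
noncomputable def frs : ℕ := (univ.filter (fun v => D.IsFree v)).card

/-- `dim D = rts D + frs D`. -/
noncomputable def dimD : ℕ := D.rts + D.frs

/-- `deg D = Σ_V C(m_V + 1, 2)`. -/
def degD : ℕ := ∑ v, (D.wt v + 1).choose 2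

/-- `cod D = deg D - dim D`. -/
noncomputable def cod : ℤ := (D.degD : ℤ) - (D.dimD : ℤ)

/-- `δ(D) = Σ_V C(m_V, 2)`. -/
def deltaD : ℕ := ∑ v, (D.wt v).choose 2

/-- `r(D) = Σ_V (m_V - Σ_{W ≻ V} m_W)`. -/
noncomputable def rCh : ℤ :=
  ∑ v, ((D.wt v : ℤ) - ∑ w ∈ univ.filter (fun w => D.prox w v), (D.wt w : ℤ))

/-- `μ(D) = 2 δ(D) - r(D) + rts D`. -/
noncomputable def mu : ℤ := 2 * (D.deltaD : ℤ) - D.rCh + (D.rts : ℤ)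

/-- An isomorphism of diagrams: a weight-preserving bijection of the vertices preserving
the immediate-predecessor and proximity relations. -/
structure Iso (D₁ D₂ : PreDiagram) where
  toEquiv : Fin D₁.n ≃ Fin D₂.n
  wt_eq : ∀ v, D₂.wt (toEquiv v) = D₁.wt v
  imPred_iff : ∀ a b, D₂.ImPred (toEquiv a) (toEquiv b) ↔ D₁.ImPred a b
  prox_iff : ∀ a b, D₂.prox (toEquiv a) (toEquiv b) ↔ D₁.prox a b

def Isomorphic (D₁ D₂ : PreDiagram) : Prop := Nonempty (Iso D₁ D₂)

/-- A realization of `D'` as a subdiagram of `D`: an injection of the vertices such that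
the weight of a vertex of `D'` is at most its weight in `D`, and the succession
(predecessor) and proximity relations of `D'` are the ones induced from `D`. -/
structure Subdiagram (D' D : PreDiagram) where
  toFun : Fin D'.n → Fin D.n
  inj : Function.Injective toFun
  wt_le : ∀ v, D'.wt v ≤ D.wt (toFun v)
  pred_iff : ∀ a b, D'.Pred a b ↔ D.Pred (toFun a) (toFun b)
  prox_iff : ∀ a b, D'.prox a b ↔ D.prox (toFun a) (toFun b)

def IsSubdiagram (D' D : PreDiagram) : Prop := Nonempty (Subdiagram D' D)

/-- The parent function of a chain `0 → 1 → ⋯ → n-1`. -/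
def chainParent (n : ℕ) (v : Fin n) : Option (Fin n) :=
  if v.val = 0 then none
  else some ⟨v.val - 1, lt_of_le_of_lt (Nat.sub_le _ _) v.isLt⟩

/-- The diagram `A_k` (`k ≥ 1`): for `k = 2i-1`, a chain of `i` free vertices of weight `2`;
for `k = 2i`, such a chain followed by a chain of two vertices of weight `1`, both
proximate to the `i`-th weight-`2` vertex. -/
def diagA (k : ℕ) : PreDiagram where
  n := if k % 2 = 0 then k / 2 + 2 else (k + 1) / 2
  parent := chainParent _
  wt := fun v => if v.val < (k + 1) / 2 then 2 else 1
  prox := fun a b => a.val = b.val + 1 ∨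
    (k % 2 = 0 ∧ a.val = k / 2 + 1 ∧ b.val + 1 = k / 2)

/-- The diagram `D_k` (`k ≥ 4`): a root of weight `3`, followed by nothing if `k = 4`,
by two vertices of weight `1` both proximate to the root if `k = 5`, and by the diagram
`A_{k-5}` if `k ≥ 6`. -/
def diagD (k : ℕ) : PreDiagram where
  n := (k - 4) / 2 + (if k % 2 = 0 then 1 else 3)
  parent := chainParent _
  wt := fun v => if v.val = 0 then 3 else if v.val ≤ (k - 4) / 2 then 2 else 1
  prox := fun a b => a.val = b.val + 1 ∨
    (k % 2 = 1 ∧ a.val = (k - 4) / 2 + 2 ∧ b.val = (k - 4) / 2)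

/-- The diagram `E_{6l+j}` (`l ≥ 1`, `j ∈ {0,1,2}`), with argument `m = 6l + j`. -/
def diagE (m : ℕ) : PreDiagram where
  n := m / 6 + (if m % 6 = 1 then 2 else 3)
  parent := chainParent _
  wt := fun v => if v.val < m / 6 then 3 else
    if 1 ≤ m % 6 ∧ v.val = m / 6 then 2 else 1
  prox := fun a b => a.val = b.val + 1 ∨
    (m % 6 = 0 ∧ (a.val = m / 6 + 1 ∨ a.val = m / 6 + 2) ∧ b.val + 1 = m / 6) ∨
    (m % 6 = 1 ∧ a.val = m / 6 + 1 ∧ b.val + 1 = m / 6) ∨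
    (m % 6 = 2 ∧ ((a.val = m / 6 + 1 ∧ b.val + 1 = m / 6) ∨
                  (a.val = m / 6 + 2 ∧ b.val = m / 6)))

/-- The diagram `J_{l,k}` (`l ≥ 2`, `k ≥ 0`): a chain of `l - 1` free vertices of weight `3`
followed by the diagram `D_{k+4}`. -/
def diagJ (l k : ℕ) : PreDiagram where
  n := (l - 1) + k / 2 + (if k % 2 = 0 then 1 else 3)
  parent := chainParent _
  wt := fun v => if v.val ≤ l - 1 then 3 else if v.val ≤ l - 1 + k / 2 then 2 else 1
  prox := fun a b => a.val = b.val + 1 ∨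
    (k % 2 = 1 ∧ a.val = (l - 1) + k / 2 + 2 ∧ b.val = (l - 1) + k / 2)

/-- The diagram `X_{1,0}`: a single root of weight `4`. -/
def diagX10 : PreDiagram where
  n := 1
  parent := chainParent _
  wt := fun _ => 4
  prox := fun a b => a.val = b.val + 1

/-- The diagram `X_{1,1}`: a root of weight `4` followed by a chain of two vertices of
weight `1`, both proximate to the root. -/
def diagX11 : PreDiagram where
  n := 3
  parent := chainParent _
  wt := fun v => if v.val = 0 then 4 else 1
  prox := fun a b => a.val = b.val + 1 ∨ (a.val = 2 ∧ b.val = 0)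

/-- The diagram `X_{1,2}`: a root of weight `4` followed by one free vertex of weight `2`. -/
def diagX12 : PreDiagram where
  n := 2
  parent := chainParent _
  wt := fun v => if v.val = 0 then 4 else 2
  prox := fun a b => a.val = b.val + 1

/-- The diagram `Z_{11}`: a root of weight `4` followed by a chain of three vertices of
weight `1`, all proximate to the root. -/
def diagZ11 : PreDiagram where
  n := 4
  parent := chainParent _
  wt := fun v => if v.val = 0 then 4 else 1
  prox := fun a b => a.val = b.val + 1 ∨ ((a.val = 2 ∨ a.val = 3) ∧ b.val = 0)

/-- The diagram `Y_{1,1}`: a root of weight `4` with two immediate free successors of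
weight `1`, each of which has one immediate successor of weight `1` that is remotely
proximate to the root. -/
def diagY11 : PreDiagram where
  n := 5
  parent := fun v =>
    if v.val = 0 then none
    else if v.val ≤ 2 then some ⟨0, by omega⟩
    else if v.val = 3 then some ⟨1, by omega⟩
    else some ⟨2, by omega⟩
  wt := fun v => if v.val = 0 then 4 else 1
  prox := fun a b => (a.val = 1 ∧ b.val = 0) ∨ (a.val = 2 ∧ b.val = 0) ∨
    (a.val = 3 ∧ (b.val = 1 ∨ b.val = 0)) ∨ (a.val = 4 ∧ (b.val = 2 ∨ b.val = 0))

/-- The disjoint union of two diagrams. -/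
def disjUnion (D₁ D₂ : PreDiagram) : PreDiagram where
  n := D₁.n + D₂.n
  parent := fun v =>
    if h : v.val < D₁.n then
      (D₁.parent ⟨v.val, h⟩).map
        (fun w => ⟨w.val, Nat.lt_of_lt_of_le w.isLt (Nat.le_add_right _ _)⟩)
    else
      (D₂.parent ⟨v.val - D₁.n, by have := v.isLt; omega⟩).map
        (fun w => ⟨D₁.n + w.val, by have := w.isLt; omega⟩)
  wt := fun v =>
    if h : v.val < D₁.n then D₁.wt ⟨v.val, h⟩
    else D₂.wt ⟨v.val - D₁.n, by have := v.isLt; omega⟩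
  prox := fun a b =>
    (∃ (ha : a.val < D₁.n) (hb : b.val < D₁.n), D₁.prox ⟨a.val, ha⟩ ⟨b.val, hb⟩) ∨
    (∃ (_ : D₁.n ≤ a.val) (_ : D₁.n ≤ b.val),
      D₂.prox ⟨a.val - D₁.n, by have := a.isLt; omega⟩
              ⟨b.val - D₁.n, by have := b.isLt; omega⟩)

end PreDiagram

/-!
Weights never increase along the succession, so a root of weight `2` forces all weights to be at
most `2`. Proximity to a vertex of such a small weight is rigid: if `w` is remotely proximate to
`t` then `t`, `w` and the vertex between them are consecutive, of weights `2`, `1` and `1`. If a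
vertex had two immediate successors, both would have weight `1`, and the leaf above one of them,
being a satellite, would violate this rigidity or the Proximity Inequality. Hence the vertices
form a chain, ordered by depth. When its leaf has weight `2`, all weights are `2` and there is
no remote proximity; when its leaf has weight `1`, it is a satellite, and the last three
vertices have weights `2`, `1`, `1`.
-/

namespace PreDiagram

variable {D : PreDiagram} {R a b t u v w : Fin D.n}

theorem ImPred.unique (ha : D.ImPred a v) (hb : D.ImPred b v) : a = b :=
  Option.some.inj (ha.symm.trans hb)

theorem isRoot_or_exists_imPred (v : Fin D.n) : D.IsRoot v ∨ ∃ u, D.ImPred u v := by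
  unfold IsRoot ImPred
  cases D.parent v <;> simp

theorem pred_iff_eq_or_properPred : D.Pred a b ↔ a = b ∨ D.ProperPred a b :=
  Relation.reflTransGen_iff_eq_or_transGen.trans (or_congr_left eq_comm)

theorem ImPred.properPred_iff (h : D.ImPred u v) : D.ProperPred a v ↔ D.Pred a u := by
  refine ⟨fun hav => ?_, fun hau => Relation.TransGen.tail' hau h⟩
  obtain ⟨c, hac, hcv⟩ := Relation.TransGen.tail'_iff.1 hav
  exact h.unique hcv ▸ hac

theorem IsLeaf.eq_of_pred (hv : D.IsLeaf v) (h : D.Pred v w) : v = w := by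
  rcases Relation.ReflTransGen.cases_head h with rfl | ⟨c, hc, -⟩
  · rfl
  · exact absurd hc (hv c)

/-- The succession relation is acyclic, so that the diagram is a forest. -/
def IsForest (D : PreDiagram) : Prop := ∀ v, ¬ D.ProperPred v v

namespace IsForest

theorem wellFounded_imPred (hF : D.IsForest) : WellFounded D.ImPred :=
  have : IsTrans _ D.ProperPred := ⟨fun _ _ _ => Relation.TransGen.trans⟩
  have : Std.Irrefl D.ProperPred := ⟨hF⟩
  Subrelation.wf Relation.TransGen.single (Finite.wellFounded_of_trans_of_irrefl D.ProperPred)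

theorem wellFounded_swap_imPred (hF : D.IsForest) : WellFounded (Function.swap D.ImPred) :=
  have : IsTrans _ (Function.swap D.ProperPred) :=
    ⟨fun _ _ _ hab hbc => Relation.TransGen.trans hbc hab⟩
  have : Std.Irrefl (Function.swap D.ProperPred) := ⟨hF⟩
  Subrelation.wf (fun h => Relation.TransGen.single (r := D.ImPred) h)
    (Finite.wellFounded_of_trans_of_irrefl (Function.swap D.ProperPred))

theorem exists_isRoot_pred (hF : D.IsForest) (v : Fin D.n) : ∃ r, D.IsRoot r ∧ D.Pred r v := by
  induction v using hF.wellFounded_imPred.induction with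
  | _ v ih =>
    rcases isRoot_or_exists_imPred v with hv | ⟨u, huv⟩
    · exact ⟨v, hv, .refl⟩
    · obtain ⟨r, hr, hru⟩ := ih u huv
      exact ⟨r, hr, hru.tail huv⟩

theorem exists_isLeaf_pred (hF : D.IsForest) (v : Fin D.n) : ∃ l, D.IsLeaf l ∧ D.Pred v l := by
  induction v using hF.wellFounded_swap_imPred.induction with
  | _ v ih =>
    by_cases hv : D.IsLeaf v
    · exact ⟨v, hv, .refl⟩
    · obtain ⟨w, hvw⟩ : ∃ w, D.ImPred v w := by simpa only [IsLeaf, not_forall, not_not] using hv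
      obtain ⟨l, hl, hwl⟩ := ih w hvw
      exact ⟨l, hl, .head hvw hwl⟩

theorem pred_of_unique_isRoot (hF : D.IsForest) (hR : ∀ v, D.IsRoot v → v = R) (v : Fin D.n) :
    D.Pred R v := by
  obtain ⟨r, hr, hrv⟩ := hF.exists_isRoot_pred v
  exact hR r hr ▸ hrv

end IsForest

/-- The depth of a vertex: the number of its proper predecessors, so that roots have depth `0`. -/
noncomputable def depth (D : PreDiagram) (v : Fin D.n) : ℕ :=
  #(univ.filter (D.ProperPred · v))

namespace IsForest

theorem depth_lt (hF : D.IsForest) (v : Fin D.n) : D.depth v < D.n :=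
  (card_lt_univ_of_notMem (x := v) (by simpa using hF v)).trans_eq (Fintype.card_fin D.n)

theorem depth_of_imPred (hF : D.IsForest) (h : D.ImPred u v) : D.depth v = D.depth u + 1 := by
  have hinsert : univ.filter (D.ProperPred · v) = insert u (univ.filter (D.ProperPred · u)) := by
    ext x
    simp [h.properPred_iff, pred_iff_eq_or_properPred]
  rw [depth, hinsert, card_insert_of_notMem (by simpa using hF u), depth]

theorem depth_lt_of_properPred (hF : D.IsForest) (h : D.ProperPred u v) :
    D.depth u < D.depth v := by
  refine card_lt_card (ssubset_iff_of_subset ?_ |>.2 ⟨u, by simpa using h, by simpa using hF u⟩)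
  exact monotone_filter_right _ fun _ _ hx => Relation.TransGen.trans hx h

end IsForest

/-- The vertices form a single chain: any two of them are comparable for succession. -/
def IsLinear (D : PreDiagram) : Prop := ∀ a b, D.Pred a b ∨ D.Pred b a

theorem isLinear_of_rightUnique_imPred (hD : Relator.RightUnique D.ImPred)
    (hR : ∀ v, D.Pred R v) : D.IsLinear :=
  fun a b => Relation.ReflTransGen.total_of_right_unique hD (hR a) (hR b)

namespace IsLinear

theorem pred_of_isLeaf (hlin : D.IsLinear) (hw : D.IsLeaf w) (v : Fin D.n) : D.Pred v w :=
  (hlin v w).elim id fun h => hw.eq_of_pred h ▸ .refl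

theorem pred_iff_depth_le (hlin : D.IsLinear) (hF : D.IsForest) :
    D.Pred a b ↔ D.depth a ≤ D.depth b := by
  constructor
  · intro h
    rcases pred_iff_eq_or_properPred.1 h with rfl | h
    · exact le_rfl
    · exact (hF.depth_lt_of_properPred h).le
  · intro h
    rcases hlin a b with hab | hba
    · exact hab
    · rcases pred_iff_eq_or_properPred.1 hba with rfl | hba
      · exact .refl
      · exact absurd h (hF.depth_lt_of_properPred hba).not_ge

theorem depth_injective (hlin : D.IsLinear) (hF : D.IsForest) : Function.Injective D.depth := by
  intro a b hab
  rcases pred_iff_eq_or_properPred.1 ((hlin.pred_iff_depth_le hF).2 hab.le) with h | h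
  · exact h
  · exact absurd hab (hF.depth_lt_of_properPred h).ne

theorem imPred_iff_depth_eq (hlin : D.IsLinear) (hF : D.IsForest) :
    D.ImPred a b ↔ D.depth b = D.depth a + 1 := by
  refine ⟨hF.depth_of_imPred, fun h => ?_⟩
  have hab : D.Pred a b := (hlin.pred_iff_depth_le hF).2 (by omega)
  rcases Relation.ReflTransGen.cases_head hab with rfl | ⟨c, hac, -⟩
  · omega
  · rwa [← hlin.depth_injective hF ((hF.depth_of_imPred hac).trans h.symm)]

theorem depth_add_one_of_isLeaf (hlin : D.IsLinear) (hF : D.IsForest) (hw : D.IsLeaf w) :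
    D.depth w + 1 = D.n := by
  have hinsert : insert w (univ.filter (D.ProperPred · w)) = univ := by
    ext u
    simpa using pred_iff_eq_or_properPred.1 (hlin.pred_of_isLeaf hw u)
  rw [depth, ← card_insert_of_notMem (by simpa using hF w), hinsert, card_fin]

/-- The enumeration of the vertices of a linear forest by their depth. -/
noncomputable def depthEquiv (hlin : D.IsLinear) (hF : D.IsForest) : Fin D.n ≃ Fin D.n :=
  Equiv.ofBijective (fun v => ⟨D.depth v, hF.depth_lt v⟩) <|
    Finite.injective_iff_bijective.1 fun _ _ h => hlin.depth_injective hF (Fin.ext_iff.1 h)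

end IsLinear

theorem chainParent_eq_some_iff {n : ℕ} {a b : Fin n} :
    chainParent n b = some a ↔ b.val = a.val + 1 := by
  unfold chainParent
  split_ifs with h
  · simpa only [false_iff, h] using (Nat.succ_ne_zero a).symm
  · simp only [Option.some.injEq, Fin.ext_iff]
    omega

theorem IsLinear.isomorphic_of_depth (hlin : D.IsLinear) (hF : D.IsForest) {E : PreDiagram}
    (hn : D.n = E.n) (hparent : E.parent = chainParent E.n)
    (hwt : ∀ v (i : Fin E.n), i.val = D.depth v → E.wt i = D.wt v)
    (hprox : ∀ a b (i j : Fin E.n), i.val = D.depth a → j.val = D.depth b →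
      (E.prox i j ↔ D.prox a b)) :
    Isomorphic D E :=
  ⟨{ toEquiv := (hlin.depthEquiv hF).trans (finCongr hn)
     wt_eq := fun v => hwt v _ rfl
     imPred_iff := fun a b => by
      rw [ImPred, hparent, chainParent_eq_some_iff, hlin.imPred_iff_depth_eq hF]
      rfl
     prox_iff := fun a b => hprox a b _ _ rfl rfl }⟩

namespace IsMED

theorem isForest (hD : D.IsMED) : D.IsForest := hD.forest

theorem prox_iff (hD : D.IsMED) : D.prox a b ↔ D.ImPred b a ∨ D.RemoteProx a b := by
  refine ⟨fun h => ?_, fun h => h.elim (hD.prox_parent a b) And.left⟩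
  rcases isRoot_or_exists_imPred a with ha | ⟨u, hua⟩
  · exact absurd h (hD.root_not_prox a ha b)
  · by_cases hbu : b = u
    · exact .inl (hbu ▸ hua)
    · exact .inr ⟨h, hD.prox_remote a u b hua h hbu⟩

theorem sum_wt_le (hD : D.IsMED) {s : Finset (Fin D.n)} (hs : ∀ w ∈ s, D.prox w v) :
    ∑ w ∈ s, D.wt w ≤ D.wt v :=
  (sum_le_sum_of_subset fun w hw => by simpa using hs w hw).trans (hD.prox_ineq v)

theorem card_le_wt (hD : D.IsMED) {s : Finset (Fin D.n)} (hs : ∀ w ∈ s, D.prox w v) :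
    #s ≤ D.wt v :=
  (card_eq_sum_ones s).trans_le <|
    (sum_le_sum fun w _ => hD.wt_pos w).trans (hD.sum_wt_le hs)

theorem wt_add_wt_le (hD : D.IsMED) (ha : D.prox a v) (hb : D.prox b v) (hab : a ≠ b) :
    D.wt a + D.wt b ≤ D.wt v := by
  rw [← sum_pair hab]
  exact hD.sum_wt_le (by simp [ha, hb])

theorem wt_le_of_pred (hD : D.IsMED) (h : D.Pred v w) : D.wt w ≤ D.wt v := by
  induction h with
  | refl => exact le_rfl
  | @tail u w _ huw ih =>
    have hwu : D.wt w ≤ D.wt u := by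
      simpa using hD.sum_wt_le (s := {w}) (by simpa using hD.prox_parent w u huw)
    exact hwu.trans ih

theorem eq_or_eq_of_prox (hD : D.IsMED) (ht : D.wt t ≤ 2) (ha : D.prox a t) (hb : D.prox b t)
    (hw : D.prox w t) (hab : a ≠ b) : w = a ∨ w = b := by
  by_contra! hne
  have : #{w, a, b} ≤ D.wt t := hD.card_le_wt (by simp [ha, hb, hw])
  rw [card_eq_three.2 ⟨w, a, b, hne.1, hne.2, hab, rfl⟩] at this
  omega

theorem exists_between_of_remoteProx (hD : D.IsMED) (h : D.RemoteProx w t) (ht : D.wt t ≤ 2) :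
    ∃ c, D.ImPred t c ∧ D.ImPred c w ∧ D.wt t = 2 ∧ D.wt c = 1 ∧ D.wt w = 1 := by
  obtain ⟨hwt, htw, hremote⟩ := h
  obtain ⟨p, htp, hpw⟩ := Relation.TransGen.tail'_iff.1 htw
  rcases Relation.ReflTransGen.cases_head htp with rfl | ⟨c, htc, hcp⟩
  · exact absurd hpw hremote
  have hpt : D.prox p t := hD.prox_between w t p hwt (.head' htc hcp) (.single hpw)
  have hne {x : Fin D.n} (hxp : D.Pred x p) : x ≠ w := by
    rintro rfl
    exact hD.forest x (hpw.properPred_iff.2 hxp)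
  have hct : D.prox c t := hD.prox_parent c t htc
  have hpc : p = c :=
    (hD.eq_or_eq_of_prox ht hct hwt hpt (hne hcp)).resolve_right (hne .refl)
  have := hD.wt_add_wt_le hct hwt (hne hcp)
  have := hD.wt_pos c
  have := hD.wt_pos w
  exact ⟨c, htc, hpc ▸ hpw, by omega, by omega, by omega⟩

theorem rightUnique_imPred (hD : D.IsMED) (hle : ∀ v, D.wt v ≤ 2) :
    Relator.RightUnique D.ImPred := by
  intro u a b hua hub
  by_contra hab
  have hau : D.prox a u := hD.prox_parent a u hua
  have hbu : D.prox b u := hD.prox_parent b u hub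
  obtain ⟨hu, ha⟩ : D.wt u = 2 ∧ D.wt a = 1 := by
    have := hD.wt_add_wt_le hau hbu hab
    have := hD.wt_pos a
    have := hD.wt_pos b
    have := hle u
    omega
  obtain ⟨l, hl, hal⟩ := hD.isForest.exists_isLeaf_pred a
  have hl1 : D.wt l = 1 := by
    have := hD.wt_le_of_pred hal
    have := hD.wt_pos l
    omega
  obtain ⟨t, hlt⟩ := hD.minimal l hl hl1
  obtain ⟨c, htc, hcl, ht, hc, -⟩ := hD.exists_between_of_remoteProx hlt (hle t)
  -- Locate `a` on the chain `t → c → l`: it equals `l`, equals `c`, or precedes `t`.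
  rcases pred_iff_eq_or_properPred.1 hal with rfl | hal
  · rw [hua.unique hcl] at hu
    omega
  rcases pred_iff_eq_or_properPred.1 (hcl.properPred_iff.1 hal) with rfl | hac
  · obtain rfl := hua.unique htc
    rcases hD.eq_or_eq_of_prox (hle u) hau hbu hlt.1 hab with rfl | rfl
    · exact hlt.2.2 hua
    · exact hlt.2.2 hub
  · have := hD.wt_le_of_pred (htc.properPred_iff.1 hac)
    omega

theorem isomorphic_diagA_of_depth (hD : D.IsMED) (hlin : D.IsLinear) {k : ℕ}
    (hn : D.n = (diagA k).n)
    (hwt : ∀ v, D.wt v = if D.depth v < (k + 1) / 2 then 2 else 1)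
    (hremote : ∀ a b, D.RemoteProx a b ↔
      k % 2 = 0 ∧ D.depth a = k / 2 + 1 ∧ D.depth b + 1 = k / 2) :
    Isomorphic D (diagA k) := by
  refine hlin.isomorphic_of_depth hD.isForest hn rfl (fun v i hi => ?_) fun a b i j hi hj => ?_
  · simp only [diagA, hwt, hi]
  · simp only [diagA, hD.prox_iff, hlin.imPred_iff_depth_eq hD.isForest, hremote, hi, hj]

theorem isomorphic_diagA_of_wt_leaf_eq_two (hD : D.IsMED) (hlin : D.IsLinear)
    (hle : ∀ v, D.wt v ≤ 2) (hw : D.IsLeaf w) (hw2 : D.wt w = 2) :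
    Isomorphic D (diagA (2 * D.depth w + 1)) := by
  have hdepth (v : Fin D.n) : D.depth v ≤ D.depth w :=
    (hlin.pred_iff_depth_le hD.isForest).1 (hlin.pred_of_isLeaf hw v)
  have hwt (v : Fin D.n) : D.wt v = 2 :=
    (hle v).antisymm (hw2 ▸ hD.wt_le_of_pred (hlin.pred_of_isLeaf hw v))
  refine hD.isomorphic_diagA_of_depth hlin ?_ (fun v => ?_) fun a b => ?_
  · rw [← hlin.depth_add_one_of_isLeaf hD.isForest hw]
    simp only [diagA]
    split_ifs <;> omega
  · rw [hwt, if_pos (by have := hdepth v; omega)]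
  · refine iff_of_false (fun h => ?_) (by omega)
    obtain ⟨-, -, -, -, -, ha⟩ := hD.exists_between_of_remoteProx h (hle b)
    have := hwt a
    omega

theorem isomorphic_diagA_of_remoteProx_leaf (hD : D.IsMED) (hlin : D.IsLinear)
    (hle : ∀ v, D.wt v ≤ 2) (hw : D.IsLeaf w) (hwt : D.RemoteProx w t) :
    Isomorphic D (diagA (2 * (D.depth t + 1))) := by
  have hF := hD.isForest
  obtain ⟨c, htc, hcw, ht, hc, -⟩ := hD.exists_between_of_remoteProx hwt (hle t)
  have hdc := hF.depth_of_imPred htc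
  have hdw := hF.depth_of_imPred hcw
  have hwt_depth (v : Fin D.n) : D.wt v = if D.depth v ≤ D.depth t then 2 else 1 := by
    split_ifs with h
    · exact (hle v).antisymm (ht ▸ hD.wt_le_of_pred ((hlin.pred_iff_depth_le hF).2 h))
    · have hcv : D.Pred c v := (hlin.pred_iff_depth_le hF).2 (by omega)
      exact (hc ▸ hD.wt_le_of_pred hcv).antisymm (hD.wt_pos v)
  refine hD.isomorphic_diagA_of_depth hlin ?_ (fun v => ?_) fun a b =>
    ⟨fun hab => ?_, fun hab => ?_⟩
  · rw [← hlin.depth_add_one_of_isLeaf hF hw]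
    simp only [diagA]
    split_ifs <;> omega
  · rw [hwt_depth]
    exact if_congr (by omega) rfl rfl
  · obtain ⟨d, hbd, hda, hb, hd, -⟩ := hD.exists_between_of_remoteProx hab (hle b)
    have hdd := hF.depth_of_imPred hbd
    have hda := hF.depth_of_imPred hda
    have hbt : D.depth b ≤ D.depth t := by
      by_contra h
      rw [hwt_depth, if_neg h] at hb
      omega
    have htd : D.depth t < D.depth d := by
      by_contra! h
      rw [hwt_depth, if_pos h] at hd
      omega
    omega
  · rwa [hlin.depth_injective hF (by omega : D.depth a = D.depth w),
      hlin.depth_injective hF (by omega : D.depth b = D.depth t)]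

end IsMED

end PreDiagram

open PreDiagram in
/-- A minimal Enriques diagram with exactly one root `R` of weight `2` is isomorphic to
the diagram `A_k` for some `k ≥ 1`. -/
theorem statement2 (D : PreDiagram) (hD : D.IsMED) (R : Fin D.n)
    (hR : D.IsRoot R) (huniq : ∀ v, D.IsRoot v → v = R) (hw : D.wt R = 2) :
    ∃ k, 1 ≤ k ∧ Isomorphic D (diagA k) := by
  have hroot : ∀ v, D.Pred R v := hD.isForest.pred_of_unique_isRoot huniq
  have hle : ∀ v, D.wt v ≤ 2 := fun v => hw ▸ hD.wt_le_of_pred (hroot v)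
  have hlin : D.IsLinear := isLinear_of_rightUnique_imPred (hD.rightUnique_imPred hle) hroot
  obtain ⟨L, hL, -⟩ := hD.isForest.exists_isLeaf_pred R
  obtain hL1 | hL2 : D.wt L = 1 ∨ D.wt L = 2 := by
    have := hle L
    have := hD.wt_pos L
    omega
  · obtain ⟨T, hT⟩ := hD.minimal L hL hL1
    exact ⟨_, by omega, hD.isomorphic_diagA_of_remoteProx_leaf hlin hle hL hT⟩
  · exact ⟨_, by omega, hD.isomorphic_diagA_of_wt_leaf_eq_two hlin hle hL hL2⟩
end

section
/- Let D be a minimal Enriques diagram with exactly one root R such that m_R = 4 and cod(D) ≤ 10. Then D is isomorphic to one of the diagrams X_{1,0}, X_{1,1}, X_{1,2}, Z_{11}, Y_{1,1}. -/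
open Classical Finset

/-!
Every vertex `V` contributes `C(m_V + 1, 2)` to `cod D`, minus one if it is free and minus one if
it is a root. A root of weight `4` contributes `8`, so the other vertices, whose contributions are
nonnegative, contribute at most `2` in total. A satellite contributes at least `1`, and a non-root
of weight `m ≥ 2` contributes at least `C(m + 1, 2) - 1 ≥ 2`.

By minimality every vertex of weight `1` has a satellite of weight `1` among its successors. Hence
a non-root of weight at least `2` exhausts the budget, and the diagram is `X_{1,2}`. Otherwise all
non-roots have weight `1`; as any vertex with a remotely proximate one has weight at least `2`,
the satellites are satellites of the root. It follows that every non-root is proximate exactly to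
its immediate predecessor and to the root, and that the vertices are the root, the satellites and
the immediate predecessors of the satellites. The diagram is then determined by its at most two
satellites and their immediate predecessors.
-/

namespace PreDiagram

section Isomorphism

variable {D E : PreDiagram}

theorem isomorphic_of_bijective (f : Fin E.n → Fin D.n) (hf : Function.Bijective f)
    (hwt : ∀ x, D.wt (f x) = E.wt x) (hparent : ∀ x, D.parent (f x) = (E.parent x).map f)
    (hprox : ∀ x y, D.prox (f x) (f y) ↔ E.prox x y) : Isomorphic D E := by
  let e : Fin E.n ≃ Fin D.n := Equiv.ofBijective f hf
  have hef (v : Fin D.n) : f (e.symm v) = v := e.apply_symm_apply v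
  refine ⟨⟨e.symm, fun v => ?_, fun a b => ?_, fun a b => ?_⟩⟩
  · rw [← hwt, hef]
  · rw [ImPred, ImPred, ← (Option.map_injective hf.injective).eq_iff, ← hparent, Option.map_some,
      hef, hef]
  · rw [← hprox, hef, hef]

end Isomorphism

section Proximity

variable {D : PreDiagram} {a b c t u v w : Fin D.n}

theorem not_properPred_of_isRoot (hv : D.IsRoot v) : ¬ D.ProperPred u v := by
  intro h
  obtain ⟨w, -, hw : D.parent v = some w⟩ := Relation.TransGen.tail'_iff.1 h
  exact Option.some_ne_none w (hw.symm.trans hv)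

theorem IsSatellite.not_isRoot (hv : D.IsSatellite v) : ¬ D.IsRoot v := by
  obtain ⟨t, -, ht, -⟩ := hv
  exact fun hroot => not_properPred_of_isRoot hroot ht

theorem exists_parent_of_not_isRoot (hv : ¬ D.IsRoot v) : ∃ u, D.parent v = some u :=
  Option.ne_none_iff_exists'.1 hv

namespace IsMED

variable (hD : D.IsMED)
include hD

theorem wellFounded_properPred : WellFounded D.ProperPred :=
  haveI : IsTrans (Fin D.n) D.ProperPred := ⟨fun _ _ _ => Relation.TransGen.trans⟩
  haveI : Std.Irrefl D.ProperPred := ⟨hD.forest⟩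
  Finite.wellFounded_of_trans_of_irrefl _

theorem wellFounded_swap_properPred : WellFounded (Function.swap D.ProperPred) :=
  haveI : IsTrans (Fin D.n) (Function.swap D.ProperPred) :=
    ⟨fun _ _ _ h₁ h₂ => Relation.TransGen.trans h₂ h₁⟩
  haveI : Std.Irrefl (Function.swap D.ProperPred) := ⟨hD.forest⟩
  Finite.wellFounded_of_trans_of_irrefl _

theorem exists_isRoot_pred (v : Fin D.n) : ∃ u, D.IsRoot u ∧ D.Pred u v := by
  induction v using hD.wellFounded_properPred.induction with
  | _ v ih =>
    by_cases hv : D.IsRoot v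
    · exact ⟨v, hv, .refl⟩
    · obtain ⟨p, hp⟩ := exists_parent_of_not_isRoot hv
      obtain ⟨u, hu, hup⟩ := ih p (.single hp)
      exact ⟨u, hu, hup.tail hp⟩

theorem exists_isLeaf_pred (v : Fin D.n) : ∃ w, D.IsLeaf w ∧ D.Pred v w := by
  induction v using hD.wellFounded_swap_properPred.induction with
  | _ v ih =>
    by_cases hv : D.IsLeaf v
    · exact ⟨v, hv, .refl⟩
    · obtain ⟨u, hu⟩ : ∃ u, D.ImPred v u := by simpa [IsLeaf] using hv
      obtain ⟨w, hw, huw⟩ := ih u (.single hu)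
      exact ⟨w, hw, huw.head hu⟩

theorem wt_le_wt_of_prox (hab : D.prox a b) : D.wt a ≤ D.wt b :=
  (single_le_sum (fun _ _ => Nat.zero_le _) (by simpa using hab)).trans (hD.prox_ineq b)

theorem wt_le_wt_of_pred (h : D.Pred u v) : D.wt v ≤ D.wt u := by
  induction h with
  | refl => exact le_rfl
  | tail _ hbc ih => exact (hD.wt_le_wt_of_prox (hD.prox_parent _ _ hbc)).trans ih

theorem wt_add_wt_le_wt_of_prox (hab : a ≠ b) (ha : D.prox a c) (hb : D.prox b c) :
    D.wt a + D.wt b ≤ D.wt c := by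
  have hsub : {a, b} ⊆ univ.filter (fun w => D.prox w c) := by
    simp [insert_subset_iff, ha, hb]
  calc D.wt a + D.wt b = ∑ w ∈ {a, b}, D.wt w := (sum_pair hab).symm
    _ ≤ ∑ w ∈ univ.filter (fun w => D.prox w c), D.wt w := sum_le_sum_of_subset hsub
    _ ≤ D.wt c := hD.prox_ineq c

theorem eq_of_prox_of_wt_eq_one (hc : D.wt c = 1) (ha : D.prox a c) (hb : D.prox b c) :
    a = b := by
  by_contra hab
  have := hD.wt_add_wt_le_wt_of_prox hab ha hb
  have := hD.wt_pos a
  have := hD.wt_pos b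
  omega

theorem two_le_wt_of_remoteProx (h : D.RemoteProx v t) : 2 ≤ D.wt t := by
  obtain ⟨hprox, hpred, hremote⟩ := h
  obtain ⟨u, htu, -⟩ := Relation.TransGen.head'_iff.1 hpred
  by_contra! hlt
  have ht : D.wt t = 1 := by have := hD.wt_pos t; omega
  have huv : u = v := hD.eq_of_prox_of_wt_eq_one ht (hD.prox_parent u t htu) hprox
  exact hremote (huv ▸ htu)

theorem exists_isSatellite_pred (hv : D.wt v = 1) :
    ∃ w, D.IsSatellite w ∧ D.wt w = 1 ∧ D.Pred v w := by
  obtain ⟨w, hleaf, hvw⟩ := hD.exists_isLeaf_pred v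
  have hw : D.wt w = 1 := le_antisymm (hv ▸ hD.wt_le_wt_of_pred hvw) (hD.wt_pos w)
  exact ⟨w, hD.minimal w hleaf hw, hw, hvw⟩

theorem parent_ne_self : D.parent v ≠ some v :=
  fun h => hD.forest v (.single h)

theorem parent_ne_of_parent_eq (h : D.parent u = some v) : D.parent v ≠ some u :=
  fun h' => hD.forest v (.head h (.single h'))

theorem not_prox_self : ¬ D.prox v v := by
  intro h
  by_cases hv : D.IsRoot v
  · exact hD.root_not_prox v hv v h
  · obtain ⟨u, hu⟩ := exists_parent_of_not_isRoot hv
    have hvu : v ≠ u := fun huv => hD.parent_ne_self (huv ▸ hu)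
    exact hD.forest v (hD.prox_remote v u v hu h hvu).1

end IsMED

end Proximity

section Codimension

variable {D : PreDiagram} {R v : Fin D.n}

/-- The contribution of the vertex `v` to `cod D`. -/
noncomputable def codAt (D : PreDiagram) (v : Fin D.n) : ℤ :=
  ((D.wt v + 1).choose 2 : ℤ) - (if D.IsRoot v then 1 else 0) - (if D.IsFree v then 1 else 0)

theorem cod_eq_sum_codAt : D.cod = ∑ v, D.codAt v := by
  simp only [cod, degD, dimD, rts, frs, codAt, sum_sub_distrib, sum_boole, Nat.cast_sum,
    Nat.cast_add]
  ring

theorem codAt_of_isRoot (hv : D.IsRoot v) : D.codAt v = (D.wt v + 1).choose 2 - 2 := by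
  have hfree : D.IsFree v := fun hsat => hsat.not_isRoot hv
  simp only [codAt, hv, hfree, if_true]
  ring

theorem choose_two_sub_one_le_codAt {k : ℕ} (hv : ¬ D.IsRoot v) (hk : k ≤ D.wt v) :
    ((k + 1).choose 2 : ℤ) - 1 ≤ D.codAt v := by
  have : (k + 1).choose 2 ≤ (D.wt v + 1).choose 2 := Nat.choose_le_choose 2 (by omega)
  simp only [codAt, hv, if_false]
  split_ifs <;> omega

theorem choose_two_le_codAt_of_isSatellite {k : ℕ} (hv : D.IsSatellite v) (hk : k ≤ D.wt v) :
    ((k + 1).choose 2 : ℤ) ≤ D.codAt v := by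
  have : (k + 1).choose 2 ≤ (D.wt v + 1).choose 2 := Nat.choose_le_choose 2 (by omega)
  simp only [codAt, IsFree, hv, hv.not_isRoot, not_true, if_false]
  omega

theorem IsMED.one_le_codAt_of_isSatellite (hD : D.IsMED) (hv : D.IsSatellite v) :
    1 ≤ D.codAt v := by
  simpa using choose_two_le_codAt_of_isSatellite hv (hD.wt_pos v)

theorem two_le_codAt_of_two_le_wt (hv : ¬ D.IsRoot v) (hwt : 2 ≤ D.wt v) :
    2 ≤ D.codAt v := by
  simpa [Nat.choose] using choose_two_sub_one_le_codAt hv hwt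

theorem IsMED.codAt_add_sum_codAt_le_cod (hD : D.IsMED) (hroot : ∀ v, D.IsRoot v ↔ v = R)
    {S : Finset (Fin D.n)} (hS : R ∉ S) : D.codAt R + ∑ v ∈ S, D.codAt v ≤ D.cod := by
  rw [cod_eq_sum_codAt, ← sum_insert hS]
  refine sum_le_sum_of_subset_of_nonneg (subset_univ _) fun v _ hv => ?_
  have hv' : ¬ D.IsRoot v := by
    rw [hroot]
    exact fun h => hv (h ▸ mem_insert_self _ _)
  simpa using choose_two_sub_one_le_codAt hv' (hD.wt_pos v)

theorem IsMED.codAt_add_card_isSatellite_le_cod (hD : D.IsMED)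
    (hroot : ∀ v, D.IsRoot v ↔ v = R) :
    D.codAt R + #{v | D.IsSatellite v} ≤ D.cod := by
  have hR : R ∉ ({v | D.IsSatellite v} : Finset (Fin D.n)) := fun h =>
    (mem_filter.1 h).2.not_isRoot ((hroot R).2 rfl)
  have hcard : (#{v | D.IsSatellite v} : ℤ) ≤ ∑ v with D.IsSatellite v, D.codAt v := by
    simpa using card_nsmul_le_sum _ _ (1 : ℤ)
      fun v hv => hD.one_le_codAt_of_isSatellite (mem_filter.1 hv).2
  linarith [hD.codAt_add_sum_codAt_le_cod hroot hR]

end Codimension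

section HeavyNonRoot

namespace IsMED

variable {D : PreDiagram} {R A v : Fin D.n} (hD : D.IsMED) (hroot : ∀ v, D.IsRoot v ↔ v = R)
  (hcod : D.cod ≤ D.codAt R + 2)
include hD hroot hcod

theorem wt_eq_two_of_two_le_wt (hAR : A ≠ R) (hA : 2 ≤ D.wt A) : D.wt A = 2 := by
  by_contra hne
  have hA3 : 3 ≤ D.wt A := by omega
  have hlarge := choose_two_sub_one_le_codAt (mt (hroot A).1 hAR) hA3
  have hsmall := hD.codAt_add_sum_codAt_le_cod hroot (S := {A}) (by simpa using hAR.symm)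
  rw [sum_singleton] at hsmall
  norm_num [Nat.choose] at hlarge
  omega

theorem codAt_nonpos_of_two_le_wt (hAR : A ≠ R) (hA : 2 ≤ D.wt A) (hvR : v ≠ R) (hvA : v ≠ A) :
    D.codAt v ≤ 0 := by
  have hsum := hD.codAt_add_sum_codAt_le_cod hroot (S := {v, A}) (by simp [hvR.symm, hAR.symm])
  rw [sum_pair hvA] at hsum
  linarith [two_le_codAt_of_two_le_wt (mt (hroot A).1 hAR) hA]

theorem eq_root_or_eq_of_two_le_wt (hAR : A ≠ R) (hA : 2 ≤ D.wt A) (v : Fin D.n) :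
    v = R ∨ v = A := by
  have hnonpos : ∀ w, w ≠ R → w ≠ A → D.codAt w ≤ 0 := fun _ =>
    hD.codAt_nonpos_of_two_le_wt hroot hcod hAR hA
  by_contra! hv
  have hv1 : D.wt v = 1 := by
    by_contra hne
    have hv2 : 2 ≤ D.wt v := by have := hD.wt_pos v; omega
    linarith [two_le_codAt_of_two_le_wt (mt (hroot v).1 hv.1) hv2, hnonpos v hv.1 hv.2]
  obtain ⟨w, hsat, hw, -⟩ := hD.exists_isSatellite_pred hv1
  have hwA : w ≠ A := by rintro rfl; omega
  have hwR : w ≠ R := mt (hroot w).2 hsat.not_isRoot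
  linarith [hD.one_le_codAt_of_isSatellite hsat, hnonpos w hwR hwA]

theorem isomorphic_diagX12 (hwt : D.wt R = 4) (hAR : A ≠ R) (hA : 2 ≤ D.wt A) :
    Isomorphic D diagX12 := by
  have hverts := hD.eq_root_or_eq_of_two_le_wt hroot hcod hAR hA
  have hA2 := hD.wt_eq_two_of_two_le_wt hroot hcod hAR hA
  have hR : D.parent R = none := (hroot R).2 rfl
  have hparent : D.parent A = some R := by
    obtain ⟨u, hu⟩ := exists_parent_of_not_isRoot (mt (hroot A).1 hAR)
    rcases hverts u with rfl | rfl
    · exact hu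
    · exact absurd hu hD.parent_ne_self
  have hproxAR : D.prox A R := hD.prox_parent A R hparent
  have hproxR : ∀ v, ¬ D.prox R v := hD.root_not_prox R hR
  have hproxA : ¬ D.prox A A := hD.not_prox_self
  refine isomorphic_of_bijective (E := diagX12) ![R, A] ⟨?_, fun v => ?_⟩ ?_ ?_ ?_
  · exact injective_pair_iff_ne.2 hAR.symm
  · rcases hverts v with rfl | rfl
    exacts [⟨(0 : Fin 2), rfl⟩, ⟨(1 : Fin 2), rfl⟩]
  · intro x
    fin_cases x <;> simp [diagX12, hwt, hA2]
  · intro x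
    fin_cases x <;> simp [diagX12, chainParent, hR, hparent]
  · intro x y
    fin_cases x <;> fin_cases y <;> simp [diagX12, hproxAR, hproxR, hproxA]

end IsMED

end HeavyNonRoot

section RootProximal

/-- Diagrams with the single root `R` in which every other vertex has weight `1` and is proximate
exactly to its immediate predecessor and to `R`. Such a diagram is determined up to isomorphism by
the weight of `R` and the map `parent`. -/
structure IsRootProximal (D : PreDiagram) (R : Fin D.n) : Prop where
  isRoot_iff : ∀ v, D.IsRoot v ↔ v = R
  wt_eq_one : ∀ v, v ≠ R → D.wt v = 1
  prox_iff : ∀ a b, D.prox a b ↔ D.parent a = some b ∨ (b = R ∧ a ≠ R)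

theorem isRootProximal_diagX10 : diagX10.IsRootProximal (0 : Fin 1) where
  isRoot_iff v := by fin_cases v; simp [diagX10, IsRoot, chainParent]
  wt_eq_one v hv := absurd (Fin.fin_one_eq_zero v) hv
  prox_iff a b := by fin_cases a; fin_cases b; simp [diagX10, chainParent]

theorem isRootProximal_diagX11 : diagX11.IsRootProximal (0 : Fin 3) where
  isRoot_iff v := by fin_cases v <;> simp [diagX11, IsRoot, chainParent]
  wt_eq_one v hv := by fin_cases v <;> simp_all [diagX11]
  prox_iff a b := by fin_cases a <;> fin_cases b <;> simp [diagX11, chainParent]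

theorem isRootProximal_diagZ11 : diagZ11.IsRootProximal (0 : Fin 4) where
  isRoot_iff v := by fin_cases v <;> simp [diagZ11, IsRoot, chainParent]
  wt_eq_one v hv := by fin_cases v <;> simp_all [diagZ11]
  prox_iff a b := by fin_cases a <;> fin_cases b <;> simp [diagZ11, chainParent]

theorem isRootProximal_diagY11 : diagY11.IsRootProximal (0 : Fin 5) where
  isRoot_iff v := by fin_cases v <;> simp [diagY11, IsRoot]
  wt_eq_one v hv := by fin_cases v <;> simp_all [diagY11]
  prox_iff a b := by fin_cases a <;> fin_cases b <;> simp [diagY11]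

variable {D E : PreDiagram} {R a b c v : Fin D.n} {R' : Fin E.n}

theorem IsMED.isRootProximal (hD : D.IsMED) (hroot : ∀ v, D.IsRoot v ↔ v = R)
    (hone : ∀ v, v ≠ R → D.wt v = 1) : D.IsRootProximal R := by
  have hremote {v t : Fin D.n} (h : D.RemoteProx v t) : t = R := by
    by_contra ht
    have := hD.two_le_wt_of_remoteProx h
    have := hone t ht
    omega
  have hprox {v : Fin D.n} (hv : v ≠ R) : D.prox v R := by
    have hRv : D.ProperPred R v := by
      obtain ⟨u, hu, huv⟩ := hD.exists_isRoot_pred v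
      obtain rfl := (hroot u).1 hu
      exact (Relation.reflTransGen_iff_eq_or_transGen.1 huv).resolve_left hv
    obtain ⟨w, ⟨t, ht⟩, -, hvw⟩ := hD.exists_isSatellite_pred (hone v hv)
    obtain rfl := hremote ht
    rcases Relation.reflTransGen_iff_eq_or_transGen.1 hvw with rfl | hvw
    · exact ht.1
    · exact hD.prox_between w t v ht.1 hRv hvw
  refine ⟨hroot, hone, fun a b => ⟨fun hab => ?_, ?_⟩⟩
  · have ha : ¬ D.IsRoot a := fun ha => hD.root_not_prox a ha b hab
    obtain ⟨u, hu⟩ := exists_parent_of_not_isRoot ha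
    by_cases hbu : b = u
    · exact .inl (hbu ▸ hu)
    · exact .inr ⟨hremote ⟨hab, hD.prox_remote a u b hu hab hbu⟩, mt (hroot a).2 ha⟩
  · rintro (h | ⟨rfl, ha⟩)
    exacts [hD.prox_parent a b h, hprox ha]

namespace IsRootProximal

theorem parent_root (h : D.IsRootProximal R) : D.parent R = none := (h.isRoot_iff R).2 rfl

theorem ne_root_of_parent_eq (h : D.IsRootProximal R) (hv : D.parent v = some a) : v ≠ R := by
  rintro rfl
  simp [h.parent_root] at hv

theorem isomorphic (h : D.IsRootProximal R) (h' : E.IsRootProximal R')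
    (hwt : D.wt R = E.wt R') (f : Fin E.n → Fin D.n) (hf : Function.Bijective f)
    (hparent : ∀ x, D.parent (f x) = (E.parent x).map f) : Isomorphic D E := by
  have hroot (x : Fin E.n) : f x = R ↔ x = R' := by
    rw [← h.isRoot_iff, ← h'.isRoot_iff, IsRoot, hparent, Option.map_eq_none_iff, IsRoot]
  have hfR : f R' = R := (hroot R').2 rfl
  refine isomorphic_of_bijective f hf (fun x => ?_) hparent fun x y => ?_
  · by_cases hx : x = R'
    · rw [hx, hfR, hwt]
    · rw [h.wt_eq_one _ (mt (hroot x).1 hx), h'.wt_eq_one x hx]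
  · rw [h.prox_iff, h'.prox_iff, hparent, ← Option.map_some,
      (Option.map_injective hf.injective).eq_iff, hroot, ne_eq, hroot]

variable (h : D.IsRootProximal R) (hD : D.IsMED)
include h hD

theorem isSatellite_iff : D.IsSatellite v ↔ v ≠ R ∧ D.parent v ≠ some R := by
  constructor
  · intro hv
    refine ⟨mt (h.isRoot_iff v).2 hv.not_isRoot, fun hp => ?_⟩
    obtain ⟨t, hprox, -, himm⟩ := hv
    rcases (h.prox_iff v t).1 hprox with ht | ⟨rfl, -⟩
    exacts [himm ht, himm hp]
  · rintro ⟨hv, hp⟩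
    obtain ⟨u, hu⟩ := exists_parent_of_not_isRoot (mt (h.isRoot_iff v).1 hv)
    have hprox : D.prox v R := (h.prox_iff v R).2 (.inr ⟨rfl, hv⟩)
    exact ⟨R, hprox, hD.prox_remote v u R hu hprox fun hRu => hp (hRu ▸ hu)⟩

theorem exists_parent_of_isSatellite (hv : D.IsSatellite v) :
    ∃ u, u ≠ R ∧ D.parent v = some u := by
  obtain ⟨u, hu⟩ := exists_parent_of_not_isRoot hv.not_isRoot
  refine ⟨u, ?_, hu⟩
  rintro rfl
  exact ((h.isSatellite_iff hD).1 hv).2 hu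

theorem parent_eq_root (hvR : v ≠ R) (hv : ¬ D.IsSatellite v) : D.parent v = some R := by
  by_contra hp
  exact hv ((h.isSatellite_iff hD).2 ⟨hvR, hp⟩)

theorem eq_of_parent_eq (hc : c ≠ R) (ha : D.parent a = some c) (hb : D.parent b = some c) :
    a = b :=
  hD.eq_of_prox_of_wt_eq_one (h.wt_eq_one c hc) (hD.prox_parent a c ha) (hD.prox_parent b c hb)

theorem eq_root_or_isSatellite_or_parent (v : Fin D.n) :
    v = R ∨ D.IsSatellite v ∨ ∃ w, D.IsSatellite w ∧ D.parent w = some v := by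
  by_cases hvR : v = R
  · exact .inl hvR
  by_cases hv : D.IsSatellite v
  · exact .inr (.inl hv)
  obtain ⟨w, hw, -, hvw⟩ := hD.exists_isSatellite_pred (h.wt_eq_one v hvR)
  rcases hvw.cases_head with rfl | ⟨x, hx : D.parent x = some v, -⟩
  · exact absurd hw hv
  · refine .inr (.inr ⟨x, (h.isSatellite_iff hD).2 ⟨h.ne_root_of_parent_eq hx, ?_⟩, hx⟩)
    rwa [hx, ne_eq, Option.some_inj]

theorem isomorphic_diagX10 (hwt : D.wt R = 4) (hsat : ∀ v, ¬ D.IsSatellite v) :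
    Isomorphic D diagX10 := by
  refine h.isomorphic isRootProximal_diagX10 hwt ![R]
    ⟨fun _ _ _ => Fin.subsingleton_one.elim _ _, fun v => ⟨(0 : Fin 1), ?_⟩⟩ fun x => ?_
  · simpa [hsat, eq_comm] using h.eq_root_or_isSatellite_or_parent hD v
  · fin_cases x
    simpa [diagX10, chainParent] using h.parent_root

theorem isomorphic_diagX11 (hwt : D.wt R = 4) (hsat : ∀ v, D.IsSatellite v ↔ v = b) :
    Isomorphic D diagX11 := by
  have hb : D.IsSatellite b := (hsat b).2 rfl
  have hbR : b ≠ R := ((h.isSatellite_iff hD).1 hb).1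
  obtain ⟨a, haR, hba⟩ := h.exists_parent_of_isSatellite hD hb
  have hab : a ≠ b := fun hab => hD.parent_ne_self (hab ▸ hba)
  have haR' : D.parent a = some R := h.parent_eq_root hD haR (mt (hsat a).1 hab)
  refine h.isomorphic isRootProximal_diagX11 hwt ![R, a, b] ⟨?_, fun v => ?_⟩ fun x => ?_
  · exact List.nodup_ofFn.1 (by simp [haR.symm, hbR.symm, hab])
  · have hv : v = R ∨ v = b ∨ v = a := by
      simpa [hsat, hba, eq_comm] using h.eq_root_or_isSatellite_or_parent hD v
    rcases hv with rfl | rfl | rfl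
    exacts [⟨(0 : Fin 3), rfl⟩, ⟨(2 : Fin 3), rfl⟩, ⟨(1 : Fin 3), rfl⟩]
  · fin_cases x <;> simp [diagX11, chainParent, h.parent_root, haR', hba]

theorem isomorphic_diagZ11 (hwt : D.wt R = 4) (hsat : ∀ v, D.IsSatellite v ↔ v = b ∨ v = c)
    (hcb : D.parent c = some b) : Isomorphic D diagZ11 := by
  have hb : D.IsSatellite b := (hsat b).2 (.inl rfl)
  have hbR : b ≠ R := ((h.isSatellite_iff hD).1 hb).1
  have hcR : c ≠ R := h.ne_root_of_parent_eq hcb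
  have hbc : b ≠ c := fun hbc => hD.parent_ne_self (hbc ▸ hcb)
  obtain ⟨a, haR, hba⟩ := h.exists_parent_of_isSatellite hD hb
  have hab : a ≠ b := fun hab => hD.parent_ne_self (hab ▸ hba)
  have hac : a ≠ c := fun hac => hD.parent_ne_of_parent_eq hcb (hac ▸ hba)
  have haR' : D.parent a = some R := h.parent_eq_root hD haR (by simp [hsat, hab, hac])
  refine h.isomorphic isRootProximal_diagZ11 hwt ![R, a, b, c] ⟨?_, fun v => ?_⟩ fun x => ?_
  · exact List.nodup_ofFn.1 (by simp [haR.symm, hbR.symm, hcR.symm, hab, hac, hbc])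
  · have hv : v = R ∨ (v = b ∨ v = c) ∨ v = a ∨ v = b := by
      simpa [hsat, or_and_right, exists_or, hba, hcb, eq_comm] using
        h.eq_root_or_isSatellite_or_parent hD v
    rcases hv with rfl | (rfl | rfl) | rfl | rfl
    exacts [⟨(0 : Fin 4), rfl⟩, ⟨(2 : Fin 4), rfl⟩, ⟨(3 : Fin 4), rfl⟩, ⟨(1 : Fin 4), rfl⟩,
      ⟨(2 : Fin 4), rfl⟩]
  · fin_cases x <;> simp [diagZ11, chainParent, h.parent_root, haR', hba, hcb]

theorem isomorphic_diagY11 (hwt : D.wt R = 4) (hbc : b ≠ c)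
    (hsat : ∀ v, D.IsSatellite v ↔ v = b ∨ v = c) (hcb : D.parent c ≠ some b)
    (hbc' : D.parent b ≠ some c) : Isomorphic D diagY11 := by
  have hb : D.IsSatellite b := (hsat b).2 (.inl rfl)
  have hc : D.IsSatellite c := (hsat c).2 (.inr rfl)
  have hbR : b ≠ R := ((h.isSatellite_iff hD).1 hb).1
  have hcR : c ≠ R := ((h.isSatellite_iff hD).1 hc).1
  obtain ⟨a, haR, hba⟩ := h.exists_parent_of_isSatellite hD hb
  obtain ⟨d, hdR, hcd⟩ := h.exists_parent_of_isSatellite hD hc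
  have had : a ≠ d := fun had => hbc (h.eq_of_parent_eq hD haR hba (had ▸ hcd))
  have hab : a ≠ b := fun hab => hD.parent_ne_self (hab ▸ hba)
  have hac : a ≠ c := fun hac => hbc' (hac ▸ hba)
  have hdb : d ≠ b := fun hdb => hcb (hdb ▸ hcd)
  have hdc : d ≠ c := fun hdc => hD.parent_ne_self (hdc ▸ hcd)
  have haR' : D.parent a = some R := h.parent_eq_root hD haR (by simp [hsat, hab, hac])
  have hdR' : D.parent d = some R := h.parent_eq_root hD hdR (by simp [hsat, hdb, hdc])
  refine h.isomorphic isRootProximal_diagY11 hwt ![R, a, d, b, c] ⟨?_, fun v => ?_⟩ fun x => ?_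
  · exact List.nodup_ofFn.1
      (by simp [haR.symm, hdR.symm, hbR.symm, hcR.symm, had, hab, hac, hdb, hdc, hbc])
  · have hv : v = R ∨ (v = b ∨ v = c) ∨ v = a ∨ v = d := by
      simpa [hsat, or_and_right, exists_or, hba, hcd, eq_comm] using
        h.eq_root_or_isSatellite_or_parent hD v
    rcases hv with rfl | (rfl | rfl) | rfl | rfl
    exacts [⟨(0 : Fin 5), rfl⟩, ⟨(3 : Fin 5), rfl⟩, ⟨(4 : Fin 5), rfl⟩, ⟨(1 : Fin 5), rfl⟩,
      ⟨(2 : Fin 5), rfl⟩]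
  · fin_cases x <;> simp [diagY11, h.parent_root, haR', hdR', hba, hcd]

theorem isomorphic_of_card_isSatellite_le_two (hwt : D.wt R = 4)
    (hcard : #{v | D.IsSatellite v} ≤ 2) :
    Isomorphic D diagX10 ∨ Isomorphic D diagX11 ∨ Isomorphic D diagZ11 ∨ Isomorphic D diagY11 := by
  have hcases : #{v | D.IsSatellite v} = 0 ∨ #{v | D.IsSatellite v} = 1 ∨
      #{v | D.IsSatellite v} = 2 := by omega
  simp only [card_eq_zero, card_eq_one, card_eq_two, Finset.ext_iff, mem_filter_univ, notMem_empty,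
    mem_singleton, mem_insert, iff_false] at hcases
  obtain hsat | ⟨b, hsat⟩ | ⟨b, c, hbc, hsat⟩ := hcases
  · exact .inl (h.isomorphic_diagX10 hD hwt hsat)
  · exact .inr (.inl (h.isomorphic_diagX11 hD hwt hsat))
  by_cases hcb : D.parent c = some b
  · exact .inr (.inr (.inl (h.isomorphic_diagZ11 hD hwt hsat hcb)))
  by_cases hbc' : D.parent b = some c
  · exact .inr (.inr (.inl (h.isomorphic_diagZ11 hD hwt (fun v => (hsat v).trans or_comm) hbc')))
  · exact .inr (.inr (.inr (h.isomorphic_diagY11 hD hwt hbc hsat hcb hbc')))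

end IsRootProximal

end RootProximal

end PreDiagram

open PreDiagram in
/-- A minimal Enriques diagram with exactly one root `R` of weight `4` and `cod(D) ≤ 10`
is isomorphic to one of `X_{1,0}`, `X_{1,1}`, `X_{1,2}`, `Z_{11}`, `Y_{1,1}`. -/
theorem statement5 (D : PreDiagram) (hD : D.IsMED) (R : Fin D.n)
    (hR : D.IsRoot R) (huniq : ∀ v, D.IsRoot v → v = R)
    (hw : D.wt R = 4) (hcod : D.cod ≤ 10) :
    Isomorphic D diagX10 ∨ Isomorphic D diagX11 ∨ Isomorphic D diagX12 ∨
    Isomorphic D diagZ11 ∨ Isomorphic D diagY11 := by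
  have hroot : ∀ v, D.IsRoot v ↔ v = R := fun v => ⟨huniq v, fun hv => hv ▸ hR⟩
  have hcodR : D.codAt R = 8 := by
    rw [codAt_of_isRoot hR, hw]
    norm_num [Nat.choose]
  by_cases hA : ∃ A, A ≠ R ∧ 2 ≤ D.wt A
  · obtain ⟨A, hAR, hA2⟩ := hA
    exact .inr (.inr (.inl (hD.isomorphic_diagX12 hroot (by omega) hw hAR hA2)))
  · push Not at hA
    have hone : ∀ v, v ≠ R → D.wt v = 1 := fun v hv =>
      le_antisymm (Nat.lt_succ_iff.1 (hA v hv)) (hD.wt_pos v)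
    have hcard : #{v | D.IsSatellite v} ≤ 2 := by
      have := hD.codAt_add_card_isSatellite_le_cod hroot
      omega
    have hcases := (hD.isRootProximal hroot hone).isomorphic_of_card_isSatellite_le_two hD hw hcard
    tauto
end
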